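/- Let n ≥ 2, suppose S is symmetric with S i i = 1 for every i and S i j ≤ 1 for all i, j, and let Γ* be a nonempty proper subset of Fin n that minimizes S_cross over all nonempty proper subsets of Fin n. Then at least one of the two parts of the partition has intra-group average similarity at least the overall average: S_{Γ*} / |Γ*|² ≥ S_total / n² or S_{(Γ*)ᶜ} / |(Γ*)ᶜ|² ≥ S_total / n². -/

import Mathlib

/-!
Write `A`, `B` for the intra-group similarities of `Γ` and `Γᶜ`, `C` for their cross similarity,
`k`, `m` for their sizes and `t` for the overall average, so that `A + B + 2 * C = (k + m) ^ 2 * t`.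

If a part has at least two elements, moving any one of them to the other part does not decrease
the cross similarity; summing these inequalities over the part gives `C ≤ A`, respectively `C ≤ B`.
If both averages were below `t`, then `A < k ^ 2 * t` and `B < m ^ 2 * t`, which forces
`k * m * t < C`. Together with `C ≤ A` and `C ≤ B` this yields both `m * t < k * t` and
`k * t < m * t`. A part with a single element has average `1`, which is the largest entry of `S`.
-/

open Finset
open scoped symmDiff

section Similarity

variable {ι M : Type*} [AddCommMonoid M] {S : ι → ι → M}

/-- The total similarity between `s` and `t`: the intra-group similarity of `s` is
`similarity S s s`, and its cross similarity is `similarity S s sᶜ`. -/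
def similarity (S : ι → ι → M) (s t : Finset ι) : M :=
  ∑ i ∈ s, ∑ j ∈ t, S i j

theorem similarity_comm (hS : ∀ i j, S i j = S j i) (s t : Finset ι) :
    similarity S s t = similarity S t s :=
  sum_comm.trans <| sum_congr rfl fun i _ ↦ sum_congr rfl fun j _ ↦ hS j i

variable [Fintype ι] [DecidableEq ι]

theorem similarity_univ_univ (S : ι → ι → M) (s : Finset ι) :
    similarity S univ univ = similarity S s s + similarity S s sᶜ +
      (similarity S sᶜ s + similarity S sᶜ sᶜ) := by
  simp only [similarity, ← sum_add_distrib, sum_add_sum_compl]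

theorem similarity_erase_compl_add (S : ι → ι → M) {s : Finset ι} {i : ι} (hi : i ∈ s) :
    similarity S (s.erase i) (s.erase i)ᶜ + (∑ j ∈ sᶜ, S i j + S i i) =
      similarity S s sᶜ + ∑ a ∈ s, S a i := by
  have hi' : i ∉ sᶜ := by simpa using hi
  simp only [similarity, compl_erase, sum_insert hi', sum_add_distrib]
  rw [← sum_erase_add s (fun a ↦ S a i) hi, ← sum_erase_add s (fun a ↦ ∑ j ∈ sᶜ, S a j) hi]
  abel

end Similarity

section LocalMinCut

variable {ι M : Type*} [Fintype ι] [DecidableEq ι] [AddCommMonoid M] [PartialOrder M]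
  {S : ι → ι → M} {s : Finset ι}

/-- The partition `{s, sᶜ}` is a local minimum of the cross similarity: moving one element
to the other part does not decrease it, as long as both parts stay nonempty. The one-element
symmetric difference covers moves in either direction. -/
def IsLocalMinCut (S : ι → ι → M) (s : Finset ι) : Prop :=
  ∀ t : Finset ι, t.Nonempty → t ≠ univ → #(s ∆ t) = 1 → similarity S s sᶜ ≤ similarity S t tᶜ

namespace IsLocalMinCut

theorem compl (hS : ∀ i j, S i j = S j i) (h : IsLocalMinCut S s) : IsLocalMinCut S sᶜ := by
  intro t ht ht' hst
  have hle := h tᶜ (by rwa [← compl_ne_univ_iff_nonempty, compl_compl])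
    (by rwa [compl_ne_univ_iff_nonempty]) (by rwa [← compl_symmDiff_compl, compl_compl])
  rw [compl_compl, similarity_comm hS sᶜ, similarity_comm hS t]
  rwa [compl_compl] at hle

theorem similarity_compl_le_erase (h : IsLocalMinCut S s) (hs : s.Nontrivial) {i : ι}
    (hi : i ∈ s) : similarity S s sᶜ ≤ similarity S (s.erase i) (s.erase i)ᶜ := by
  refine h _ hs.erase_nonempty (fun huniv ↦ notMem_erase i s (huniv ▸ mem_univ i)) ?_
  rw [symmDiff_of_ge (erase_subset i s), sdiff_erase_self hi, card_singleton]

variable [IsOrderedCancelAddMonoid M]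

theorem similarity_compl_add_sum_diag_le (h : IsLocalMinCut S s) (hs : s.Nontrivial) :
    similarity S s sᶜ + ∑ i ∈ s, S i i ≤ similarity S s s := by
  have row_le : ∀ i ∈ s, ∑ j ∈ sᶜ, S i j + S i i ≤ ∑ a ∈ s, S a i := fun i hi ↦
    le_of_add_le_add_left <| (add_le_add_left (h.similarity_compl_le_erase hs hi) _).trans_eq
      (similarity_erase_compl_add S hi)
  calc similarity S s sᶜ + ∑ i ∈ s, S i i
      = ∑ i ∈ s, (∑ j ∈ sᶜ, S i j + S i i) := sum_add_distrib.symm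
    _ ≤ ∑ i ∈ s, ∑ a ∈ s, S a i := sum_le_sum row_le
    _ = similarity S s s := sum_comm

theorem similarity_compl_le (h : IsLocalMinCut S s) (hs : s.Nontrivial)
    (hdiag : ∀ i ∈ s, 0 ≤ S i i) : similarity S s sᶜ ≤ similarity S s s :=
  (le_add_of_nonneg_right (sum_nonneg hdiag)).trans (h.similarity_compl_add_sum_diag_le hs)

end IsLocalMinCut

end LocalMinCut

section AverageSimilarity

variable {ι K : Type*} [Field K] {S : ι → ι → K}

/-- The intra-group average similarity `S_s / |s|²`, with value `0` when `s` is empty. -/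
def averageSimilarity (S : ι → ι → K) (s : Finset ι) : K :=
  similarity S s s / (#s : K) ^ 2

theorem averageSimilarity_singleton (S : ι → ι → K) (i : ι) :
    averageSimilarity S {i} = S i i := by
  simp [averageSimilarity, similarity]

variable [LinearOrder K] [IsStrictOrderedRing K]

theorem averageSimilarity_le {s : Finset ι} (hs : s.Nonempty) {c : K}
    (hle : ∀ i ∈ s, ∀ j ∈ s, S i j ≤ c) : averageSimilarity S s ≤ c := by
  have hcard : (0 : K) < #s := mod_cast hs.card_pos
  rw [averageSimilarity, div_le_iff₀ (pow_pos hcard 2)]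
  calc similarity S s s ≤ ∑ _i ∈ s, ∑ _j ∈ s, c :=
        sum_le_sum fun i hi ↦ sum_le_sum fun j hj ↦ hle i hi j hj
    _ = c * (#s : K) ^ 2 := by simp only [sum_const, nsmul_eq_mul]; ring

theorem div_add_sq_le_div_sq_or {A B C k m : K} (hk : 0 < k) (hm : 0 < m) (hA : C ≤ A)
    (hB : C ≤ B) : (A + B + 2 * C) / (k + m) ^ 2 ≤ A / k ^ 2 ∨
      (A + B + 2 * C) / (k + m) ^ 2 ≤ B / m ^ 2 := by
  have htotal : (A + B + 2 * C) / (k + m) ^ 2 * (k + m) ^ 2 = A + B + 2 * C :=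
    div_mul_cancel₀ _ (by positivity)
  generalize (A + B + 2 * C) / (k + m) ^ 2 = t at htotal ⊢
  by_contra! ⟨hAt, hBt⟩
  rw [div_lt_iff₀ (by positivity)] at hAt hBt
  have hC : k * m * t < C := by linarith
  have hmk : m * t < k * t := lt_of_mul_lt_mul_left (by linarith [hC]) hk.le
  have hkm : k * t < m * t := lt_of_mul_lt_mul_left (by linarith [hC]) hm.le
  exact hmk.asymm hkm

variable [Fintype ι] [DecidableEq ι]

theorem averageSimilarity_univ_le_or_of_similarity_compl_le (hS : ∀ i j, S i j = S j i)
    {s : Finset ι} (hs : s.Nonempty) (hsc : sᶜ.Nonempty)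
    (hle : similarity S s sᶜ ≤ similarity S s s)
    (hle_compl : similarity S s sᶜ ≤ similarity S sᶜ sᶜ) :
    averageSimilarity S univ ≤ averageSimilarity S s ∨
      averageSimilarity S univ ≤ averageSimilarity S sᶜ := by
  have htotal : similarity S univ univ =
      similarity S s s + similarity S sᶜ sᶜ + 2 * similarity S s sᶜ := by
    rw [similarity_univ_univ S s, similarity_comm hS sᶜ s]
    ring
  have hcard : (#(univ : Finset ι) : K) = #s + #sᶜ := by
    rw [card_univ, ← card_add_card_compl s, Nat.cast_add]
  simp only [averageSimilarity, htotal, hcard]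
  exact div_add_sq_le_div_sq_or (mod_cast hs.card_pos) (mod_cast hsc.card_pos) hle hle_compl

theorem min_cut_part_average_ge_general (hS : ∀ i j, S i j = S j i) (hdiag : ∀ i, 0 ≤ S i i)
    (havg : ∀ i, averageSimilarity S univ ≤ S i i) {Γ : Finset ι} (hne : Γ.Nonempty)
    (hprop : Γ ≠ univ) (hmin : IsLocalMinCut S Γ) :
    averageSimilarity S Γ ≥ averageSimilarity S univ ∨
      averageSimilarity S Γᶜ ≥ averageSimilarity S univ := by
  have hnec : Γᶜ.Nonempty := by rwa [← compl_ne_univ_iff_nonempty, compl_compl]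
  obtain ⟨a, rfl⟩ | hΓ := hne.exists_eq_singleton_or_nontrivial
  · exact .inl ((havg a).trans_eq (averageSimilarity_singleton S a).symm)
  obtain ⟨a, ha⟩ | hΓc := hnec.exists_eq_singleton_or_nontrivial
  · exact .inr (ha ▸ (havg a).trans_eq (averageSimilarity_singleton S a).symm)
  have hle := hmin.similarity_compl_le hΓ fun i _ ↦ hdiag i
  have hle_compl := (hmin.compl hS).similarity_compl_le hΓc fun i _ ↦ hdiag i
  rw [compl_compl, similarity_comm hS] at hle_compl
  exact averageSimilarity_univ_le_or_of_similarity_compl_le hS hne hnec hle hle_compl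

end AverageSimilarity

/-- If `Γ*` minimizes the cross similarity over all nonempty proper subsets of `Fin n`,
then at least one part of the partition has intra-group average similarity at least the
overall average. -/
theorem min_cut_part_average_ge (n : ℕ) (hn : 2 ≤ n) (S : Fin n → Fin n → ℝ)
    (hS : ∀ i j, S i j = S j i) (hdiag : ∀ i, S i i = 1) (hle : ∀ i j, S i j ≤ 1)
    (Γ : Finset (Fin n)) (hne : Γ.Nonempty) (hprop : Γ ≠ Finset.univ)
    (hmin : ∀ Γ' : Finset (Fin n), Γ'.Nonempty → Γ' ≠ Finset.univ →
      (∑ i ∈ Γ, ∑ j ∈ Γᶜ, S i j) ≤ ∑ i ∈ Γ', ∑ j ∈ Γ'ᶜ, S i j) :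
    (∑ i ∈ Γ, ∑ j ∈ Γ, S i j) / (Γ.card : ℝ) ^ 2 ≥
        (∑ i : Fin n, ∑ j : Fin n, S i j) / (n : ℝ) ^ 2 ∨
      (∑ i ∈ Γᶜ, ∑ j ∈ Γᶜ, S i j) / ((Γᶜ : Finset (Fin n)).card : ℝ) ^ 2 ≥
        (∑ i : Fin n, ∑ j : Fin n, S i j) / (n : ℝ) ^ 2 := by
  have havg (i : Fin n) : averageSimilarity S univ ≤ S i i :=
    hdiag i ▸ averageSimilarity_le ⟨i, mem_univ i⟩ fun j _ k _ ↦ hle j k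
  simpa only [averageSimilarity, similarity, card_univ, Fintype.card_fin] using
    min_cut_part_average_ge_general hS (fun i ↦ hdiag i ▸ zero_le_one) havg hne hprop
      fun t ht ht' _ ↦ hmin t ht ht'
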